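/- Let V be a finite-dimensional real inner product space, r ≥ 3, and let Cl⁰_r denote the even subalgebra of the Clifford algebra over ℝ of the negative-definite quadratic form Q(v) = -‖v‖² on ℝ^r, with canonical embedding ι and standard orthonormal basis e_1, …, e_r. Let φ : Cl⁰_r → End(V) be a unital ℝ-algebra homomorphism such that J_{ij} := φ(ι(e_i) * ι(e_j)) is a skew-adjoint endomorphism of V for all i ≠ j. Let κ ∈ ℝ and let R : V × V → End(V) be an ℝ-bilinear map satisfying, for all X, Y ∈ V, the identity [R(X,Y), J_{12}] = κ Σ_{s=3}^r ( ⟨J_{s1}X, Y⟩ J_{s2} − ⟨J_{s2}X, Y⟩ J_{s1} ). Then for all X, Y ∈ V: [R(X, J_{12}Y), J_{12}] = J_{12} ∘ [R(X,Y), J_{12}]. -/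

import Mathlib

open scoped RealInnerProductSpace

/-!
For orthogonal `x`, `y` with `Q x = Q y = -1`, the endomorphism `I = J_{xy}` is a complex structure,
and every `z` orthogonal to `x` and `y` satisfies `J_{zy} = I ∘ J_{zx}`. Hence each summand of the
curvature identity has the form `B(PX, Y) IP - B(IPX, Y) P` with `P = J_{zx}`. When `I` is
skew-adjoint, such an expression is `I`-linear in `Y`: replacing `Y` by `IY` turns the coefficients
`B(PX, Y)`, `B(IPX, Y)` into `-B(IPX, Y)`, `B(PX, Y)`, which has the same effect as replacing the
operators `IP`, `P` by `I(IP) = -P`, `IP`.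
-/

open CliffordAlgebra (EvenHom even.ι)

section EvenHom

variable {K M A : Type*} [CommRing K] [AddCommGroup M] [Module K M] [Ring A] [Algebra K A]
  {Q : QuadraticForm K M} (f : EvenHom Q A) {x y z : M}

theorem bilin_eq_neg_swap_of_isOrtho (hxy : Q.IsOrtho x y) : f.bilin x y = -f.bilin y x := by
  have contract_add := f.contract (x + y)
  rw [hxy, map_add (algebraMap K A)] at contract_add
  simp only [map_add, LinearMap.add_apply, f.contract] at contract_add
  grind

theorem bilin_mul_self_of_isOrtho (hxy : Q.IsOrtho x y) :
    f.bilin x y * f.bilin x y = -algebraMap K A (Q x * Q y) := by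
  nth_rw 2 [bilin_eq_neg_swap_of_isOrtho f hxy]
  rw [mul_neg, f.contract_mid, f.contract, Algebra.smul_def, ← map_mul, mul_comm]

theorem bilin_mul_bilin_of_isOrtho (hxy : Q.IsOrtho x y) (hzx : Q.IsOrtho z x)
    (hzy : Q.IsOrtho z y) : f.bilin x y * f.bilin z x = -(Q x • f.bilin z y) :=
  calc f.bilin x y * f.bilin z x
    _ = f.bilin y x * f.bilin x z := by
      rw [bilin_eq_neg_swap_of_isOrtho f hxy, bilin_eq_neg_swap_of_isOrtho f hzx, neg_mul_neg]
    _ = Q x • f.bilin y z := f.contract_mid y x z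
    _ = -(Q x • f.bilin z y) := by rw [bilin_eq_neg_swap_of_isOrtho f hzy.symm, smul_neg]

end EvenHom

section SkewAdjoint

variable {K V : Type*} [CommRing K] [AddCommGroup V] [Module K V] {B : LinearMap.BilinForm K V}

/-- The summand `⟨PX, Y⟩ S - ⟨SX, Y⟩ P` of the curvature identity, where `P` and `S` stand for
`J_{s1}` and `J_{s2}`, and `B` is the inner product. -/
def curvatureTerm (B : LinearMap.BilinForm K V) (P S : Module.End K V) (X Y : V) :
    Module.End K V :=
  B (P X) Y • S - B (S X) Y • P

theorem curvatureTerm_apply_right {I : Module.End K V} (hI : B.IsSkewAdjoint I)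
    (hI_sq : I * I = -1) (P : Module.End K V) (X Y : V) :
    curvatureTerm B P (I * P) X (I Y) = I * curvatureTerm B P (I * P) X Y := by
  have apply_right (u : V) : B u (I Y) = -B (I u) Y := by simp [hI u Y]
  have hIIP : I * (I * P) = -P := by rw [← mul_assoc, hI_sq, neg_one_mul]
  calc B (P X) (I Y) • (I * P) - B ((I * P) X) (I Y) • P
    _ = -(B ((I * P) X) Y) • (I * P) + B ((I * (I * P)) X) Y • P := by
      simp only [apply_right, neg_smul, sub_neg_eq_add, Module.End.mul_apply]
    _ = -(B ((I * P) X) Y) • (I * P) - B (P X) Y • P := by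
      rw [hIIP, LinearMap.neg_apply, map_neg, LinearMap.neg_apply, neg_smul _ P, sub_eq_add_neg]
    _ = B (P X) Y • (I * (I * P)) - B ((I * P) X) Y • (I * P) := by
      rw [hIIP, smul_neg, neg_smul, sub_eq_add_neg, sub_eq_add_neg, add_comm]
    _ = I * (B (P X) Y • (I * P) - B ((I * P) X) Y • P) := by
      rw [mul_sub, mul_smul_comm, mul_smul_comm]

theorem stmt10_general {M ι : Type*} [AddCommGroup M] [Module K M] {Q : QuadraticForm K M}
    (J : EvenHom Q (Module.End K V)) {x y : M} (hx : Q x = -1) (hy : Q y = -1)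
    (hxy : Q.IsOrtho x y) (hskew : B.IsSkewAdjoint (J.bilin x y))
    {s : Finset ι} {z : ι → M} (hzx : ∀ i ∈ s, Q.IsOrtho (z i) x)
    (hzy : ∀ i ∈ s, Q.IsOrtho (z i) y) {κ : K} {R : V → V → Module.End K V}
    (hR : ∀ X Y, ⁅R X Y, J.bilin x y⁆ =
      κ • ∑ i ∈ s, curvatureTerm B (J.bilin (z i) x) (J.bilin (z i) y) X Y) (X Y : V) :
    ⁅R X (J.bilin x y Y), J.bilin x y⁆ = J.bilin x y * ⁅R X Y, J.bilin x y⁆ := by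
  have hI_sq : J.bilin x y * J.bilin x y = -1 := by
    rw [bilin_mul_self_of_isOrtho J hxy, hx, hy, neg_mul_neg, one_mul, map_one]
  have hI_mul (i : ι) (hi : i ∈ s) : J.bilin (z i) y = J.bilin x y * J.bilin (z i) x := by
    rw [bilin_mul_bilin_of_isOrtho J hxy (hzx i hi) (hzy i hi), hx, neg_one_smul, neg_neg]
  rw [hR, hR, mul_smul_comm, Finset.mul_sum]
  congr 1
  refine Finset.sum_congr rfl fun i hi => ?_
  rw [hI_mul i hi]
  exact curvatureTerm_apply_right hskew hI_sq _ X Y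

end SkewAdjoint

theorem isOrtho_of_inner_eq_zero {E : Type*} [NormedAddCommGroup E] [InnerProductSpace ℝ E]
    {Q : QuadraticForm ℝ E} (hQ : ∀ v, Q v = -‖v‖ ^ 2) {v w : E} (h : ⟪v, w⟫ = 0) :
    Q.IsOrtho v w := by
  rw [QuadraticMap.isOrtho_def, hQ, hQ, hQ, norm_add_sq_real, h]
  ring

section EuclideanSpace

variable {ι : Type*} [Fintype ι] [DecidableEq ι] {Q : QuadraticForm ℝ (EuclideanSpace ℝ ι)}

theorem apply_single_one_eq_neg_one (hQ : ∀ v, Q v = -‖v‖ ^ 2) (i : ι) :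
    Q (EuclideanSpace.single i 1) = -1 := by
  rw [hQ, PiLp.norm_single, norm_one, one_pow]

theorem isOrtho_single_one_single_one (hQ : ∀ v, Q v = -‖v‖ ^ 2) {i j : ι} (hij : i ≠ j) :
    Q.IsOrtho (EuclideanSpace.single i 1) (EuclideanSpace.single j 1) :=
  isOrtho_of_inner_eq_zero hQ (EuclideanSpace.orthonormal_single.inner_eq_zero hij)

end EuclideanSpace

theorem stmt10
    (V : Type*) [NormedAddCommGroup V] [InnerProductSpace ℝ V] [FiniteDimensional ℝ V]
    (r : ℕ) (hr : 3 ≤ r)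
    (Q : QuadraticForm ℝ (EuclideanSpace ℝ (Fin r)))
    (hQ : ∀ v : EuclideanSpace ℝ (Fin r), Q v = -‖v‖ ^ 2)
    (φ : CliffordAlgebra.even Q →ₐ[ℝ] Module.End ℝ V)
    (e : Fin r → EuclideanSpace ℝ (Fin r))
    (he : ∀ i, e i = EuclideanSpace.single i (1 : ℝ))
    (J : Fin r → Fin r → Module.End ℝ V)
    (hJ : ∀ i j, J i j = φ ((CliffordAlgebra.even.ι Q).bilin (e i) (e j)))
    (hskew : ∀ i j, i ≠ j → ∀ x y : V, ⟪J i j x, y⟫ = -⟪x, J i j y⟫)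
    (κ : ℝ) (R : V →ₗ[ℝ] V →ₗ[ℝ] Module.End ℝ V)
    (hR : ∀ X Y : V,
      ⁅R X Y, J ⟨0, by omega⟩ ⟨1, by omega⟩⁆ =
        κ • ∑ s ∈ Finset.univ.filter (fun s : Fin r => 2 ≤ (s : ℕ)),
          (⟪J s ⟨0, by omega⟩ X, Y⟫ • J s ⟨1, by omega⟩
            - ⟪J s ⟨1, by omega⟩ X, Y⟫ • J s ⟨0, by omega⟩)) :
    ∀ X Y : V,
      ⁅R X (J ⟨0, by omega⟩ ⟨1, by omega⟩ Y), J ⟨0, by omega⟩ ⟨1, by omega⟩⁆ =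
        J ⟨0, by omega⟩ ⟨1, by omega⟩ * ⁅R X Y, J ⟨0, by omega⟩ ⟨1, by omega⟩⁆ := by
  obtain rfl := funext he
  obtain rfl : J = fun i j => φ ((even.ι Q).bilin (.single i 1) (.single j 1)) := funext₂ hJ
  have h01 : (⟨0, by omega⟩ : Fin r) ≠ ⟨1, by omega⟩ := by simp
  exact stmt10_general (B := innerₗ V) ((even.ι Q).compr₂ φ)
    (apply_single_one_eq_neg_one hQ _) (apply_single_one_eq_neg_one hQ _)
    (isOrtho_single_one_single_one hQ h01)
    (fun X Y => (hskew _ _ h01 X Y).trans (inner_neg_right _ _).symm)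
    (fun i hi => isOrtho_single_one_single_one hQ (by rintro rfl; simp at hi))
    (fun i hi => isOrtho_single_one_single_one hQ (by rintro rfl; simp at hi)) hR
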